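/- arXiv:2410.21513 — 2 statements merged into one kernel-verified Lean document; each statement's English description precedes it below -/
import Mathlib

section
/- Let A = (a_{ij})_{i,j∈[n]} be a real symmetric n×n matrix with largest eigenvalue λ_n, let B = (a_{ij})_{i,j∈[n−1]} be its top-left (n−1)×(n−1) principal submatrix, let 𝐚 = (a_{n1},…,a_{n,n−1}) ∈ ℝ^{n−1}, and let 𝐱 ∈ ℝ^{n−1} be a unit eigenvector of B corresponding to an eigenvalue μ of B. Then for every ε ∈ [0,1], λ_n − μ ≥ 2√(ε(1−ε)) |𝐚ᵀ𝐱| − ε μ + ε a_{nn}. -/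
/-- The largest eigenvalue of a real symmetric matrix, as the supremum of the Rayleigh
quotient over the unit sphere. -/
noncomputable def rayleighSup {n : ℕ} (A : Matrix (Fin n) (Fin n) ℝ) : ℝ :=
  ⨆ v : {v : Fin n → ℝ // ∑ i, v i ^ 2 = 1}, ∑ i, ∑ j, v.1 i * A i j * v.1 j

/-!
Write `q` for the quadratic form of `A`. For an orthonormal pair `u`, `w`, both
`√(1 - ε) u + √ε w` and `√(1 - ε) u - √ε w` are unit vectors, and the larger of the two values
of `q` there is `(1 - ε) q u + ε q w + √(ε(1 - ε)) |uᵀAw + wᵀAu|`. The estimate is the case where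
`u` is `x` padded by a zero and `w` is the last standard basis vector.
-/

open Matrix

lemma dotProduct_mulVec_eq_sum_sum {m n R : Type*} [Fintype m] [Fintype n]
    [NonUnitalSemiring R] (A : Matrix m n R) (v : m → R) (w : n → R) :
    v ⬝ᵥ A *ᵥ w = ∑ i, ∑ j, v i * A i j * w j := by
  simp only [dotProduct, mulVec, Finset.mul_sum, mul_assoc]

lemma dotProduct_mulVec_le_sum_abs {m n R : Type*} [Fintype m] [Fintype n] [Ring R]
    [LinearOrder R] [IsStrictOrderedRing R] (A : Matrix m n R) {v : m → R} {w : n → R}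
    (hv : ∀ i, |v i| ≤ 1) (hw : ∀ j, |w j| ≤ 1) :
    v ⬝ᵥ A *ᵥ w ≤ ∑ i, ∑ j, |A i j| := by
  rw [dotProduct_mulVec_eq_sum_sum]
  refine Finset.sum_le_sum fun i _ ↦ Finset.sum_le_sum fun j _ ↦ ?_
  calc v i * A i j * w j ≤ |v i| * |A i j| * |w j| := by
        simpa only [abs_mul] using le_abs_self (v i * A i j * w j)
    _ ≤ 1 * |A i j| * 1 := by gcongr; exacts [hv i, hw j]
    _ = |A i j| := by rw [one_mul, mul_one]

lemma abs_le_one_of_dotProduct_self_eq_one {n R : Type*} [Fintype n] [Ring R]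
    [LinearOrder R] [IsStrictOrderedRing R] {v : n → R} (hv : v ⬝ᵥ v = 1) (i : n) :
    |v i| ≤ 1 := by
  rw [← sq_le_one_iff_abs_le_one, sq, ← hv]
  exact Finset.single_le_sum (f := fun j ↦ v j * v j) (fun j _ ↦ mul_self_nonneg (v j))
    (Finset.mem_univ i)

lemma dotProduct_mulVec_self_le_rayleighSup {n : ℕ} (A : Matrix (Fin n) (Fin n) ℝ)
    {v : Fin n → ℝ} (hv : v ⬝ᵥ v = 1) : v ⬝ᵥ A *ᵥ v ≤ rayleighSup A := by
  have hsq (w : Fin n → ℝ) : ∑ i, w i ^ 2 = w ⬝ᵥ w := by simp only [dotProduct, sq]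
  simp only [rayleighSup, ← dotProduct_mulVec_eq_sum_sum]
  refine le_ciSup (f := fun w : {w : Fin n → ℝ // ∑ i, w i ^ 2 = 1} ↦ w.1 ⬝ᵥ A *ᵥ w.1)
    ⟨∑ i, ∑ j, |A i j|, ?_⟩ ⟨v, (hsq v).trans hv⟩
  rintro _ ⟨⟨w, hw⟩, rfl⟩
  have hw_le := abs_le_one_of_dotProduct_self_eq_one ((hsq w).symm.trans hw)
  exact dotProduct_mulVec_le_sum_abs A hw_le hw_le

lemma binaryForm_le_rayleighSup_of_orthonormal {n : ℕ} (A : Matrix (Fin n) (Fin n) ℝ)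
    {u w : Fin n → ℝ} (hu : u ⬝ᵥ u = 1) (hw : w ⬝ᵥ w = 1) (huw : u ⬝ᵥ w = 0)
    {c s : ℝ} (hcs : c ^ 2 + s ^ 2 = 1) :
    c ^ 2 * (u ⬝ᵥ A *ᵥ u) + s ^ 2 * (w ⬝ᵥ A *ᵥ w) + c * s * (u ⬝ᵥ A *ᵥ w + w ⬝ᵥ A *ᵥ u)
      ≤ rayleighSup A := by
  have hwu : w ⬝ᵥ u = 0 := dotProduct_comm w u ▸ huw
  have hunit : (c • u + s • w) ⬝ᵥ (c • u + s • w) = 1 := by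
    simp only [dotProduct_add, add_dotProduct, dotProduct_smul, smul_dotProduct, smul_eq_mul,
      hu, hw, huw, hwu]
    linear_combination hcs
  calc _ = (c • u + s • w) ⬝ᵥ A *ᵥ (c • u + s • w) := by
        simp only [mulVec_add, mulVec_smul, dotProduct_add, add_dotProduct, dotProduct_smul,
          smul_dotProduct, smul_eq_mul]
        ring
    _ ≤ rayleighSup A := dotProduct_mulVec_self_le_rayleighSup A hunit

lemma convexCombination_add_abs_le_rayleighSup_of_orthonormal {n : ℕ}
    (A : Matrix (Fin n) (Fin n) ℝ) {u w : Fin n → ℝ} (hu : u ⬝ᵥ u = 1) (hw : w ⬝ᵥ w = 1)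
    (huw : u ⬝ᵥ w = 0) {ε : ℝ} (hε : ε ∈ Set.Icc (0 : ℝ) 1) :
    (1 - ε) * (u ⬝ᵥ A *ᵥ u) + ε * (w ⬝ᵥ A *ᵥ w)
        + √(ε * (1 - ε)) * |u ⬝ᵥ A *ᵥ w + w ⬝ᵥ A *ᵥ u|
      ≤ rayleighSup A := by
  have hc : √(1 - ε) ^ 2 = 1 - ε := Real.sq_sqrt (sub_nonneg.2 hε.2)
  have hs : √ε ^ 2 = ε := Real.sq_sqrt hε.1
  have hplus := binaryForm_le_rayleighSup_of_orthonormal A hu hw huw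
    (c := √(1 - ε)) (s := √ε) (by rw [hc, hs]; ring)
  have hminus := binaryForm_le_rayleighSup_of_orthonormal A hu hw huw
    (c := √(1 - ε)) (s := -√ε) (by rw [neg_sq, hc, hs]; ring)
  rw [neg_sq] at hminus
  rw [hc, hs] at hplus hminus
  rw [Real.sqrt_mul hε.1]
  rcases abs_choice (u ⬝ᵥ A *ᵥ w + w ⬝ᵥ A *ᵥ u) with habs | habs <;> rw [habs] <;> linarith

section SnocZero

variable {n : ℕ} {R : Type*} [NonUnitalNonAssocSemiring R]

lemma snoc_zero_dotProduct (x : Fin n → R) (y : Fin (n + 1) → R) :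
    (Fin.snoc x 0 : Fin (n + 1) → R) ⬝ᵥ y = x ⬝ᵥ (y ∘ Fin.castSucc) := by
  simp [dotProduct, Fin.sum_univ_castSucc]

lemma mulVec_snoc_zero {m : Type*} (A : Matrix m (Fin (n + 1)) R) (x : Fin n → R) :
    A *ᵥ (Fin.snoc x 0 : Fin (n + 1) → R) = A.submatrix id Fin.castSucc *ᵥ x := by
  ext i
  simp [mulVec, dotProduct, Fin.sum_univ_castSucc]

end SnocZero

lemma dotProduct_mulVec_self_eq_of_mulVec_eq_smul {n R : Type*} [Fintype n] [CommSemiring R]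
    {B : Matrix n n R} {x : n → R} {mu : R} (hBx : B *ᵥ x = mu • x) (hx : x ⬝ᵥ x = 1) :
    x ⬝ᵥ B *ᵥ x = mu := by
  rw [hBx, dotProduct_smul, hx, smul_eq_mul, mul_one]

theorem eigenvalue_gap_estimate_general {n : ℕ} (A : Matrix (Fin (n + 1)) (Fin (n + 1)) ℝ)
    (x : Fin n → ℝ) (hx : x ⬝ᵥ x = 1) (mu : ℝ)
    (hmu : x ⬝ᵥ A.submatrix Fin.castSucc Fin.castSucc *ᵥ x = mu)
    (ε : ℝ) (hε : ε ∈ Set.Icc (0 : ℝ) 1) :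
    2 * √(ε * (1 - ε))
          * |∑ i : Fin n, (A i.castSucc (Fin.last n) + A (Fin.last n) i.castSucc) / 2 * x i|
        - ε * mu + ε * A (Fin.last n) (Fin.last n)
      ≤ rayleighSup A - mu := by
  set u : Fin (n + 1) → ℝ := Fin.snoc x 0
  set w : Fin (n + 1) → ℝ := Pi.single (Fin.last n) 1
  have huu : u ⬝ᵥ u = 1 := by simpa [u, snoc_zero_dotProduct, Function.comp_def] using hx
  have hww : w ⬝ᵥ w = 1 := by simp [w]
  have huw : u ⬝ᵥ w = 0 := by simp [u, w]
  have huAu : u ⬝ᵥ A *ᵥ u = mu := by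
    rw [snoc_zero_dotProduct, mulVec_snoc_zero, ← hmu]
    rfl
  have hwAw : w ⬝ᵥ A *ᵥ w = A (Fin.last n) (Fin.last n) := by simp [w]
  have hcross : u ⬝ᵥ A *ᵥ w + w ⬝ᵥ A *ᵥ u
      = 2 * ∑ i : Fin n, (A i.castSucc (Fin.last n) + A (Fin.last n) i.castSucc) / 2 * x i := by
    rw [snoc_zero_dotProduct, mulVec_snoc_zero, mulVec_single_one, single_one_dotProduct]
    simp only [mulVec, dotProduct, Finset.mul_sum, ← Finset.sum_add_distrib]
    refine Finset.sum_congr rfl fun i _ ↦ ?_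
    simp only [Function.comp_apply, col_apply, submatrix_apply, id]
    ring
  have key := convexCombination_add_abs_le_rayleighSup_of_orthonormal A huu hww huw hε
  rw [huAu, hwAw, hcross, abs_mul, abs_two] at key
  linarith

/-- **Eigenvalue gap estimate.**  Let `A` be a real symmetric `(n+1) × (n+1)` matrix with largest
eigenvalue `λ`, let `B` be its top-left `n × n` principal submatrix, `𝐚` the off-diagonal part
of the last row, and `x` a unit eigenvector of `B` with eigenvalue `μ`.  Then for every
`ε ∈ [0,1]`, `λ − μ ≥ 2 √(ε(1−ε)) |𝐚ᵀx| − ε μ + ε a_{nn}`. -/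
theorem eigenvalue_gap_estimate {n : ℕ}
    (A : Matrix (Fin (n + 1)) (Fin (n + 1)) ℝ) (hA : A.IsSymm)
    (x : Fin n → ℝ) (hx : ∑ i, x i ^ 2 = 1) (mu : ℝ)
    (hxeig : ∀ i : Fin n, ∑ j : Fin n, A i.castSucc j.castSucc * x j = mu * x i)
    (ε : ℝ) (hε : ε ∈ Set.Icc (0 : ℝ) 1) :
    2 * Real.sqrt (ε * (1 - ε)) * |∑ i : Fin n, A (Fin.last n) i.castSucc * x i|
        - ε * mu + ε * A (Fin.last n) (Fin.last n)
      ≤ rayleighSup A - mu := by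
  have hxx : x ⬝ᵥ x = 1 := by simpa only [dotProduct, sq] using hx
  simpa only [hA.apply, add_self_div_two] using eigenvalue_gap_estimate_general A x hxx mu
    (dotProduct_mulVec_self_eq_of_mulVec_eq_smul (funext hxeig) hxx) ε hε
end

section
/- Let 𝒫 be a probability measure on ℝ^d with support S and Lebesgue density f. Suppose: (1) f is differentiable on the interior of S, and, setting ∇f ≡ 0 outside int(S), the function ‖∇f‖₂ is in L¹(ℝ^d); and (2) there exists a finite constant C(f), depending only on f, such that 𝒫(S_r) ≤ C(f) r for all r ≥ 0, where S_r = {x ∈ ℝ^d : inf_{y∈S^c} ‖x − y‖₂ ≤ r} (with S_r = ∅ if S = ℝ^d). Then for X ~ 𝒫 and W a standard d-dimensional Gaussian vector independent of X, and for every p, s ≥ 0, E[ ‖W‖₂^p (1 − f(X + sW)/f(X))₊ ] ≤ C'(f,p) s, where C'(f,p) < ∞ depends only on f and p. -/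
open MeasureTheory ProbabilityTheory
open scoped Classical

/-- The coordinate gradient vector `(∂_1 f(x), …, ∂_d f(x))` of `f : ℝ^d → ℝ`. -/
noncomputable def gradVec {d : ℕ} (f : (Fin d → ℝ) → ℝ) (x : Fin d → ℝ) : Fin d → ℝ :=
  fun i => fderiv ℝ f x (Pi.single i 1)

/-!
For a fixed shift `v`, split `∫ (1 - f (x + v) / f x)₊ dP` at the boundary layer
`cthickening ‖v‖ Uᶜ`, where `U = int S`. On the layer the integrand is at most `1`, and the layer
has mass `O(‖v‖)` by assumption. Off the layer the whole segment from `x` to `x + v` lies in `U`;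
since `(1 - f (x + v) / f x)₊ f x ≤ |f (x + v) - f x|`, the fundamental theorem of calculus along
the segment, Tonelli's theorem and translation invariance bound the contribution by
`‖v‖ ∫_U ‖∇f‖`. Integrating the resulting bound `K ‖v‖` at `v = s w` against `‖w‖ ^ p` costs a
moment of order `p + 1` of the noise.
-/

section Calculus

open Set

variable {E F : Type*} [NormedAddCommGroup E] [NormedSpace ℝ E] [NormedAddCommGroup F]
  [NormedSpace ℝ F] [CompleteSpace F]

lemma enorm_sub_le_setLIntegral_enorm_deriv {g : ℝ → F} {a b : ℝ} (hab : a ≤ b)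
    (hg : ∀ t ∈ Icc a b, DifferentiableAt ℝ g t) :
    ‖g b - g a‖ₑ ≤ ∫⁻ t in Icc a b, ‖deriv g t‖ₑ := by
  by_cases htop : ∫⁻ t in Icc a b, ‖deriv g t‖ₑ = ⊤
  · exact htop ▸ le_top
  have hint : IntervalIntegrable (deriv g) volume a b :=
    (intervalIntegrable_iff_integrableOn_Icc_of_le hab).2
      ⟨aestronglyMeasurable_deriv g _, lt_top_iff_ne_top.2 htop⟩
  rw [← intervalIntegral.integral_deriv_eq_sub (by rwa [uIcc_of_le hab]) hint,
    intervalIntegral.integral_of_le hab, ← integral_Icc_eq_integral_Ioc]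
  exact enorm_integral_le_lintegral_enorm _

lemma enorm_sub_le_mul_setLIntegral_enorm_fderiv {f : E → F} {x v : E}
    (hf : ∀ t ∈ Icc (0 : ℝ) 1, DifferentiableAt ℝ f (x + t • v)) :
    ‖f (x + v) - f x‖ₑ ≤ ‖v‖ₑ * ∫⁻ t in Icc (0 : ℝ) 1, ‖fderiv ℝ f (x + t • v)‖ₑ := by
  have hderiv : ∀ t ∈ Icc (0 : ℝ) 1,
      HasDerivAt (fun t : ℝ => f (x + t • v)) (fderiv ℝ f (x + t • v) v) t := fun t ht =>
    (hf t ht).hasFDerivAt.comp_hasDerivAt t <| by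
      simpa using ((hasDerivAt_id t).smul_const v).const_add x
  calc ‖f (x + v) - f x‖ₑ
      ≤ ∫⁻ t in Icc (0 : ℝ) 1, ‖deriv (fun t : ℝ => f (x + t • v)) t‖ₑ := by
        simpa using enorm_sub_le_setLIntegral_enorm_deriv zero_le_one
          fun t ht => (hderiv t ht).differentiableAt
    _ ≤ ∫⁻ t in Icc (0 : ℝ) 1, ‖v‖ₑ * ‖fderiv ℝ f (x + t • v)‖ₑ :=
        setLIntegral_mono' measurableSet_Icc fun t ht => by
          rw [(hderiv t ht).deriv, mul_comm]
          exact (fderiv ℝ f (x + t • v)).le_opENorm v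
    _ = _ := lintegral_const_mul' _ _ enorm_ne_top

end Calculus

section Translation

open Set Metric

lemma lintegral_lintegral_add_right {T G : Type*} [MeasurableSpace T] [MeasurableSpace G]
    [AddGroup G] [MeasurableAdd₂ G] {ρ : Measure T} [SFinite ρ] {μ : Measure G} [SFinite μ]
    [μ.IsAddRightInvariant] {h : T → G} (hh : Measurable h) {F : G → ENNReal}
    (hF : Measurable F) : ∫⁻ x, (∫⁻ t, F (x + h t) ∂ρ) ∂μ = (∫⁻ x, F x ∂μ) * ρ univ := by
  rw [lintegral_lintegral_swap (Measurable.aemeasurable (by fun_prop))]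
  simp [lintegral_add_right_eq_self]

variable {E : Type*} [NormedAddCommGroup E] [NormedSpace ℝ E]

lemma add_smul_mem_of_notMem_cthickening_compl {U : Set E} {x v : E}
    (hx : x ∉ cthickening ‖v‖ Uᶜ) {t : ℝ} (ht : t ∈ Icc (0 : ℝ) 1) : x + t • v ∈ U := by
  by_contra hU
  refine hx (mem_cthickening_of_dist_le x (x + t • v) ‖v‖ Uᶜ hU ?_)
  rw [dist_self_add_right, norm_smul, Real.norm_of_nonneg ht.1]
  exact mul_le_of_le_one_left (norm_nonneg v) ht.2

variable [MeasurableSpace E] [BorelSpace E] [SecondCountableTopology E]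
  {μ : Measure E} [SFinite μ] [μ.IsAddRightInvariant]

lemma setLIntegral_enorm_add_sub_le {F : Type*} [NormedAddCommGroup F] [NormedSpace ℝ F]
    [CompleteSpace F] {f : E → F} {U : Set E} (hU : IsOpen U)
    (hf : ∀ x ∈ U, DifferentiableAt ℝ f x) (v : E) :
    ∫⁻ x in (cthickening ‖v‖ Uᶜ)ᶜ, ‖f (x + v) - f x‖ₑ ∂μ ≤
      ‖v‖ₑ * ∫⁻ x in U, ‖fderiv ℝ f x‖ₑ ∂μ := by
  set G : E → ENNReal := U.indicator fun x => ‖fderiv ℝ f x‖ₑ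
  have hG : Measurable G := (measurable_fderiv ℝ f).enorm.indicator hU.measurableSet
  calc ∫⁻ x in (cthickening ‖v‖ Uᶜ)ᶜ, ‖f (x + v) - f x‖ₑ ∂μ
      ≤ ∫⁻ x in (cthickening ‖v‖ Uᶜ)ᶜ, ‖v‖ₑ * (∫⁻ t in Icc (0 : ℝ) 1, G (x + t • v)) ∂μ := by
        refine setLIntegral_mono' isClosed_cthickening.measurableSet.compl fun x hx => ?_
        have hseg : ∀ t ∈ Icc (0 : ℝ) 1, x + t • v ∈ U := fun t ht =>
          add_smul_mem_of_notMem_cthickening_compl hx ht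
        refine (enorm_sub_le_mul_setLIntegral_enorm_fderiv fun t ht =>
          hf _ (hseg t ht)).trans_eq ?_
        congr 1
        exact setLIntegral_congr_fun measurableSet_Icc fun t ht =>
          (indicator_of_mem (hseg t ht) fun x => ‖fderiv ℝ f x‖ₑ).symm
    _ ≤ ∫⁻ x, ‖v‖ₑ * (∫⁻ t in Icc (0 : ℝ) 1, G (x + t • v)) ∂μ := setLIntegral_le_lintegral _ _
    _ = ‖v‖ₑ * ∫⁻ x in U, ‖fderiv ℝ f x‖ₑ ∂μ := by
        rw [lintegral_const_mul' _ _ enorm_ne_top, lintegral_lintegral_add_right (by fun_prop) hG,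
          lintegral_indicator hU.measurableSet]
        simp

end Translation

section Density

open Set Metric

lemma ofReal_mul_ofReal_one_sub_div_le {a : ℝ} (ha : 0 ≤ a) (b : ℝ) :
    ENNReal.ofReal a * ENNReal.ofReal (1 - b / a) ≤ ‖b - a‖ₑ := by
  rcases ha.eq_or_lt with rfl | hpos
  · simp
  · rw [← ENNReal.ofReal_mul ha, mul_one_sub, mul_div_cancel₀ _ hpos.ne', enorm_sub_rev]
    exact Real.ofReal_le_enorm _

variable {E : Type*} [NormedAddCommGroup E] [NormedSpace ℝ E] [MeasurableSpace E] [BorelSpace E]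
  [SecondCountableTopology E] {μ : Measure E} [SFinite μ] [μ.IsAddRightInvariant]
  {f : E → ℝ} {U : Set E}

lemma lintegral_one_sub_div_le {P : Measure E} (hP : P = μ.withDensity fun x => .ofReal (f x))
    (hf : ∀ x, 0 ≤ f x) (hfm : Measurable f) (hU : IsOpen U)
    (hdiff : ∀ x ∈ U, DifferentiableAt ℝ f x) (v : E) :
    ∫⁻ x, .ofReal (1 - f (x + v) / f x) ∂P ≤
      P (cthickening ‖v‖ Uᶜ) + ‖v‖ₑ * ∫⁻ x in U, ‖fderiv ℝ f x‖ₑ ∂μ := by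
  have hT : MeasurableSet (cthickening ‖v‖ Uᶜ) := isClosed_cthickening.measurableSet
  rw [← lintegral_add_compl _ hT]
  gcongr
  · refine (lintegral_mono fun x => ?_).trans_eq (setLIntegral_one _)
    exact ENNReal.ofReal_le_one.2 (sub_le_self _ (div_nonneg (hf _) (hf _)))
  · rw [hP, setLIntegral_withDensity_eq_setLIntegral_mul _ (by fun_prop) (by fun_prop) hT.compl]
    exact (lintegral_mono fun x => ofReal_mul_ofReal_one_sub_div_le (hf x) _).trans
      (setLIntegral_enorm_add_sub_le hU hdiff v)

lemma lintegral_lintegral_rpow_mul_one_sub_div_le_of_measurable {P : Measure E} {ν : Measure E}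
    [SFinite ν] (hP : P = μ.withDensity fun x => .ofReal (f x)) (hf : ∀ x, 0 ≤ f x)
    (hfm : Measurable f) (hU : IsOpen U) (hdiff : ∀ x ∈ U, DifferentiableAt ℝ f x) {C : ENNReal}
    (hC : ∀ r : ℝ, 0 ≤ r → P (cthickening r Uᶜ) ≤ C * .ofReal r) {p : ℝ} (hp : 0 ≤ p) (s : ℝ) :
    ∫⁻ x, ∫⁻ w, ‖w‖ₑ ^ p * .ofReal (1 - f (x + s • w) / f x) ∂ν ∂P ≤
      (∫⁻ w, ‖w‖ₑ ^ (p + 1) ∂ν) * ((C + ∫⁻ x in U, ‖fderiv ℝ f x‖ₑ ∂μ) * ‖s‖ₑ) := by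
  set K : ENNReal := C + ∫⁻ x in U, ‖fderiv ℝ f x‖ₑ ∂μ
  have hshift (w : E) : ∫⁻ x, .ofReal (1 - f (x + s • w) / f x) ∂P ≤ K * ‖s • w‖ₑ := by
    refine (lintegral_one_sub_div_le hP hf hfm hU hdiff (s • w)).trans ?_
    rw [add_mul, mul_comm ‖s • w‖ₑ, ← ofReal_norm (s • w)]
    gcongr
    exact hC _ (norm_nonneg _)
  have : SFinite P := hP ▸ inferInstance
  rw [lintegral_lintegral_swap (Measurable.aemeasurable (by fun_prop)),
    ← lintegral_mul_const _ (by fun_prop)]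
  refine lintegral_mono fun w => ?_
  calc ∫⁻ x, ‖w‖ₑ ^ p * .ofReal (1 - f (x + s • w) / f x) ∂P
      = ‖w‖ₑ ^ p * ∫⁻ x, .ofReal (1 - f (x + s • w) / f x) ∂P :=
        lintegral_const_mul _ (by fun_prop)
    _ ≤ ‖w‖ₑ ^ p * (K * ‖s • w‖ₑ) := by gcongr; exact hshift w
    _ = ‖w‖ₑ ^ (p + 1) * (K * ‖s‖ₑ) := by
      rw [ENNReal.rpow_add_of_nonneg p 1 hp zero_le_one, ENNReal.rpow_one, enorm_smul]
      ring

lemma withDensity_ofReal_indicator {α : Type*} [MeasurableSpace α] {m : Measure α} {g : α → ℝ}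
    {A : Set α} (hA : MeasurableSet A)
    (hnull : m.withDensity (fun x => .ofReal (g x)) Aᶜ = 0) :
    m.withDensity (fun x => .ofReal (A.indicator g x)) =
      m.withDensity fun x => .ofReal (g x) := by
  have hind : (fun x => ENNReal.ofReal (A.indicator g x)) =
      A.indicator fun x => .ofReal (g x) :=
    (indicator_comp_of_zero ENNReal.ofReal_zero).symm
  rw [hind, withDensity_indicator hA, ← restrict_withDensity hA,
    Measure.restrict_eq_self_of_ae_mem (mem_ae_iff.2 hnull)]

lemma lintegral_lintegral_rpow_mul_one_sub_div_le {P : Measure E} {ν : Measure E}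
    [SFinite ν] (hP : P = μ.withDensity fun x => .ofReal (f x)) (hf : ∀ x, 0 ≤ f x)
    (hU : IsOpen U) (hdiff : ∀ x ∈ U, DifferentiableAt ℝ f x) {C : ENNReal}
    (hC : ∀ r : ℝ, 0 ≤ r → P (cthickening r Uᶜ) ≤ C * .ofReal r) {p : ℝ} (hp : 0 ≤ p) (s : ℝ) :
    ∫⁻ x, ∫⁻ w, ‖w‖ₑ ^ p * .ofReal (1 - f (x + s • w) / f x) ∂ν ∂P ≤
      (∫⁻ w, ‖w‖ₑ ^ (p + 1) ∂ν) * ((C + ∫⁻ x in U, ‖fderiv ℝ f x‖ₑ ∂μ) * ‖s‖ₑ) := by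
  -- `f` need not be measurable off `U`, as Tonelli's theorem requires. Replacing it by
  -- `U.indicator f` changes neither `P` nor `∇f` on `U`, and can only increase the left side.
  set g : E → ℝ := U.indicator f
  have hnull : P Uᶜ = 0 := by
    refine measure_mono_null (subset_closure.trans (closure_subset_cthickening 0 _)) ?_
    simpa using hC 0 le_rfl
  have hPg : P = μ.withDensity fun x => .ofReal (g x) := by
    rw [withDensity_ofReal_indicator hU.measurableSet (hP ▸ hnull), hP]
  have hgf (x : E) (hx : x ∈ U) : g =ᶠ[nhds x] f :=
    (eqOn_indicator (f := f)).eventuallyEq_of_mem (hU.mem_nhds hx)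
  have hgm : Measurable g := by
    have hfc : ContinuousOn f U := fun x hx => (hdiff x hx).continuousAt.continuousWithinAt
    change Measurable (U.indicator f)
    rw [← piecewise_eq_indicator]
    exact hfc.measurable_piecewise continuousOn_const hU.measurableSet
  calc ∫⁻ x, ∫⁻ w, ‖w‖ₑ ^ p * .ofReal (1 - f (x + s • w) / f x) ∂ν ∂P
      ≤ ∫⁻ x, ∫⁻ w, ‖w‖ₑ ^ p * .ofReal (1 - g (x + s • w) / g x) ∂ν ∂P := by
        refine lintegral_mono_ae ?_
        filter_upwards [mem_ae_iff.2 hnull] with x hx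
        refine lintegral_mono fun w => ?_
        rw [show g x = f x from indicator_of_mem hx f]
        gcongr
        · exact hf x
        · exact indicator_le_self' (fun x _ => hf x) _
    _ ≤ (∫⁻ w, ‖w‖ₑ ^ (p + 1) ∂ν) * ((C + ∫⁻ x in U, ‖fderiv ℝ g x‖ₑ ∂μ) * ‖s‖ₑ) :=
        lintegral_lintegral_rpow_mul_one_sub_div_le_of_measurable hPg
          (indicator_nonneg fun x _ => hf x) hgm hU
          (fun x hx => (hgf x hx).differentiableAt_iff.2 (hdiff x hx)) hC hp s
    _ = (∫⁻ w, ‖w‖ₑ ^ (p + 1) ∂ν) * ((C + ∫⁻ x in U, ‖fderiv ℝ f x‖ₑ ∂μ) * ‖s‖ₑ) := by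
        rw [setLIntegral_congr_fun hU.measurableSet fun x hx => by rw [(hgf x hx).fderiv_eq]]

lemma enorm_integral_integral_le_lintegral_lintegral_enorm {α β G : Type*} [MeasurableSpace α]
    [MeasurableSpace β] [NormedAddCommGroup G] [NormedSpace ℝ G] {m : Measure α} {n : Measure β}
    (F : α → β → G) : ‖∫ x, ∫ y, F x y ∂n ∂m‖ₑ ≤ ∫⁻ x, ∫⁻ y, ‖F x y‖ₑ ∂n ∂m :=
  (enorm_integral_le_lintegral_enorm _).trans
    (lintegral_mono fun _ => enorm_integral_le_lintegral_enorm _)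

lemma enorm_norm_rpow_mul_max_zero {G : Type*} [SeminormedAddCommGroup G] (w : G) {p : ℝ}
    (hp : 0 ≤ p) (a : ℝ) : ‖‖w‖ ^ p * max a 0‖ₑ = ‖w‖ₑ ^ p * .ofReal a := by
  rw [enorm_mul, Real.enorm_rpow_of_nonneg (norm_nonneg w) hp, enorm_norm,
    Real.enorm_of_nonneg (le_max_right a 0), ENNReal.ofReal_max, ENNReal.ofReal_zero,
    max_eq_left zero_le]

theorem assumptionP_of_smooth_density_general {P : Measure E} {ν : Measure E} [SFinite ν]
    (hP : P = μ.withDensity fun x => .ofReal (f x)) (hf : ∀ x, 0 ≤ f x)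
    (hU : IsOpen U) (hdiff : ∀ x ∈ U, DifferentiableAt ℝ f x)
    (hgrad : IntegrableOn (fun x => ‖fderiv ℝ f x‖) U μ) {C : ℝ}
    (hC : ∀ r : ℝ, 0 ≤ r → P (cthickening r Uᶜ) ≤ .ofReal (C * r)) {p : ℝ} (hp : 0 ≤ p)
    (hν : Integrable (fun w => ‖w‖ ^ (p + 1)) ν) :
    ∃ C' : ℝ, 0 ≤ C' ∧ ∀ s : ℝ,
      ∫ x, ∫ w, ‖w‖ ^ p * max (1 - f (x + s • w) / f x) 0 ∂ν ∂P ≤ C' * |s| := by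
  set K : ENNReal := (∫⁻ w, ‖w‖ₑ ^ (p + 1) ∂ν) *
    (ENNReal.ofReal C + ∫⁻ x in U, ‖fderiv ℝ f x‖ₑ ∂μ) with hK
  have hKtop : K ≠ ⊤ := by
    refine ENNReal.mul_ne_top ?_ (ENNReal.add_ne_top.2 ⟨ENNReal.ofReal_ne_top, ?_⟩)
    · simpa [HasFiniteIntegral, Real.enorm_rpow_of_nonneg, add_nonneg hp zero_le_one] using
        hν.hasFiniteIntegral.ne
    · simpa [HasFiniteIntegral] using hgrad.hasFiniteIntegral.ne
  have hbound (s : ℝ) :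
      ‖∫ x, ∫ w, ‖w‖ ^ p * max (1 - f (x + s • w) / f x) 0 ∂ν ∂P‖ₑ ≤ K * ‖s‖ₑ := by
    refine (enorm_integral_integral_le_lintegral_lintegral_enorm _).trans ?_
    rw [hK, mul_assoc]
    simp_rw [enorm_norm_rpow_mul_max_zero _ hp]
    exact lintegral_lintegral_rpow_mul_one_sub_div_le hP hf hU hdiff
      (fun r hr => (hC r hr).trans_eq (ENNReal.ofReal_mul' hr)) hp s
  refine ⟨K.toReal, ENNReal.toReal_nonneg, fun s => (Real.le_norm_self _).trans ?_⟩
  simpa using ENNReal.toReal_mono (ENNReal.mul_ne_top hKtop enorm_ne_top) (hbound s)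

end Density

section EuclideanCoordinates

open Set Metric WithLp

lemma integrable_norm_rpow_stdGaussian {E : Type*} [NormedAddCommGroup E] [InnerProductSpace ℝ E]
    [FiniteDimensional ℝ E] [MeasurableSpace E] [BorelSpace E] {q : ℝ} (hq : 0 ≤ q) :
    Integrable (fun w => ‖w‖ ^ q) (stdGaussian E) := by
  simpa [ENNReal.toReal_ofReal hq] using
    (IsGaussian.memLp_id (stdGaussian E) (.ofReal q) ENNReal.ofReal_ne_top).integrable_norm_rpow'

lemma map_withDensity_of_measurePreserving {α β : Type*} [MeasurableSpace α] [MeasurableSpace β]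
    {m : Measure α} {n : Measure β} {e : α ≃ᵐ β} (he : MeasurePreserving e m n) (h : α → ENNReal) :
    (m.withDensity h).map e = n.withDensity (h ∘ e.symm) := by
  ext s hs
  rw [e.map_apply, withDensity_apply _ (e.measurable hs), withDensity_apply _ hs,
    ← he.setLIntegral_comp_preimage_emb e.measurableEmbedding]
  simp

variable {d : ℕ}

lemma toLp_preimage_cthickening (A : Set (Fin d → ℝ)) {r : ℝ} (hr : 0 ≤ r) :
    toLp 2 ⁻¹' cthickening r (ofLp ⁻¹' A : Set (EuclideanSpace ℝ (Fin d))) =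
      {x | A.Nonempty ∧ sInf ((fun y => √(∑ i, (x i - y i) ^ 2)) '' A) ≤ r} := by
  ext x
  rcases A.eq_empty_or_nonempty with rfl | hA
  · simp
  have hA' : (ofLp ⁻¹' A : Set (EuclideanSpace ℝ (Fin d))).Nonempty :=
    hA.preimage (ofLp_surjective 2)
  have hdist : sInf ((fun y => √(∑ i, (x i - y i) ^ 2)) '' A) =
      infDist (toLp 2 x) (ofLp ⁻¹' A : Set (EuclideanSpace ℝ (Fin d))) := by
    have himage : ofLp ⁻¹' A = toLp 2 '' A :=
      ((WithLp.equiv 2 (Fin d → ℝ)).symm.image_eq_preimage_symm A).symm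
    rw [infDist_eq_iInf, ← sInf_image', himage, image_image]
    simp [EuclideanSpace.dist_eq, Real.dist_eq, sq_abs]
  rw [mem_ofPred_eq, hdist, and_iff_right hA, infDist,
    ← ENNReal.le_ofReal_iff_toReal_le (infEDist_ne_top hA') hr]
  rfl

lemma map_toLp_cthickening_compl_interior (P : Measure (Fin d → ℝ)) (S : Set (Fin d → ℝ))
    {r : ℝ} (hr : 0 ≤ r) :
    P.map (toLp 2)
        (cthickening r (ofLp ⁻¹' interior S : Set (EuclideanSpace ℝ (Fin d)))ᶜ) =
      P {x | Sᶜ.Nonempty ∧ sInf ((fun y => √(∑ i, (x i - y i) ^ 2)) '' Sᶜ) ≤ r} := by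
  have hclosure : (ofLp ⁻¹' interior S : Set (EuclideanSpace ℝ (Fin d)))ᶜ =
      closure (ofLp ⁻¹' Sᶜ) := by
    rw [← preimage_compl, ← closure_compl]
    exact (PiLp.homeomorph 2 fun _ : Fin d => ℝ).preimage_closure Sᶜ
  rw [hclosure, cthickening_closure, ← toLp_preimage_cthickening _ hr]
  exact (MeasurableEquiv.toLp 2 (Fin d → ℝ)).map_apply _

lemma sqrt_sum_gradVec_sq (f : (Fin d → ℝ) → ℝ) (x : Fin d → ℝ) :
    √(∑ i, gradVec f x i ^ 2) =
      ‖fderiv ℝ (f ∘ (ofLp : EuclideanSpace ℝ (Fin d) → _)) (toLp 2 x)‖ := by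
  rw [← Real.sqrt_sq (norm_nonneg (fderiv ..)),
    (EuclideanSpace.basisFun (Fin d) ℝ).norm_dual]
  congr 2 with i
  rw [← PiLp.coe_continuousLinearEquiv 2 ℝ, ContinuousLinearEquiv.comp_right_fderiv]
  simp [gradVec]
  rfl

lemma integrableOn_norm_fderiv_comp_ofLp {f : (Fin d → ℝ) → ℝ} {U : Set (Fin d → ℝ)}
    (hU : MeasurableSet U)
    (hf : Integrable (fun x => √(∑ i, (if x ∈ U then gradVec f x i else 0) ^ 2))) :
    IntegrableOn (fun x => ‖fderiv ℝ (f ∘ (ofLp : EuclideanSpace ℝ (Fin d) → _)) x‖)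
      (ofLp ⁻¹' U) := by
  have hind : (fun x => √(∑ i, (if x ∈ U then gradVec f x i else 0) ^ 2)) =
      U.indicator fun x =>
        ‖fderiv ℝ (f ∘ (ofLp : EuclideanSpace ℝ (Fin d) → _)) (toLp 2 x)‖ := by
    ext x
    by_cases hx : x ∈ U <;> simp [hx, sqrt_sum_gradVec_sq]
  rw [hind, integrable_indicator_iff hU] at hf
  exact ((PiLp.volume_preserving_ofLp (Fin d)).integrableOn_comp_preimage
    (MeasurableEquiv.toLp 2 (Fin d → ℝ)).symm.measurableEmbedding).2 hf

lemma integral_integral_stdGaussian_map_toLp (P : Measure (Fin d → ℝ))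
    (G : EuclideanSpace ℝ (Fin d) → EuclideanSpace ℝ (Fin d) → ℝ) :
    ∫ x, ∫ w, G x w ∂stdGaussian (EuclideanSpace ℝ (Fin d)) ∂P.map (toLp 2) =
      ∫ x, ∫ w, G (toLp 2 x) (toLp 2 w) ∂(Measure.pi fun _ => gaussianReal 0 1) ∂P := by
  rw [← map_pi_eq_stdGaussian]
  simp_rw [← MeasurableEquiv.coe_toLp, integral_map_equiv]

end EuclideanCoordinates

/-- **A sufficient condition for Assumption (P).**  Let `𝒫` be a probability measure on `ℝ^d`
with support `S` (the smallest closed set of full measure) and Lebesgue density `f`.  Suppose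
(1) `f` is differentiable on `int S` and, setting `∇f ≡ 0` outside `int S`, `‖∇f‖₂ ∈ L¹`;
and (2) `𝒫(S_r) ≤ C(f) r` for all `r ≥ 0`, where
`S_r = {x : inf_{y ∈ Sᶜ} ‖x − y‖₂ ≤ r}` (empty if `S = ℝ^d`).  Then for `X ~ 𝒫` and `W` an
independent standard `d`-dimensional Gaussian, for all `p, s ≥ 0` one has
`E[‖W‖₂^p (1 − f(X+sW)/f(X))₊] ≤ C'(f,p) s` with `C'(f,p) < ∞` depending only on `f`, `p`. -/
theorem assumptionP_of_smooth_density
    (d : ℕ) (f : (Fin d → ℝ) → ℝ) (P : Measure (Fin d → ℝ)) [IsProbabilityMeasure P]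
    (hf : ∀ x, 0 ≤ f x)
    (hdens : P = volume.withDensity fun x => ENNReal.ofReal (f x))
    (S : Set (Fin d → ℝ))
    (hSclosed : IsClosed S) (hSfull : P S = 1)
    (hSmin : ∀ F : Set (Fin d → ℝ), IsClosed F → P F = 1 → S ⊆ F)
    (hdiff : ∀ x ∈ interior S, DifferentiableAt ℝ f x)
    (hgradL1 : Integrable
      (fun x => Real.sqrt (∑ i, (if x ∈ interior S then gradVec f x i else 0) ^ 2))
      (volume : Measure (Fin d → ℝ)))
    (C : ℝ)
    (hC : ∀ r : ℝ, 0 ≤ r →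
      P {x | Sᶜ.Nonempty ∧
          sInf ((fun y => Real.sqrt (∑ i, (x i - y i) ^ 2)) '' Sᶜ) ≤ r} ≤
        ENNReal.ofReal (C * r)) :
    ∀ p : ℝ, 0 ≤ p → ∃ C' : ℝ, 0 ≤ C' ∧ ∀ s : ℝ, 0 ≤ s →
      (∫ x, ∫ w, Real.sqrt (∑ i, w i ^ 2) ^ p * max (1 - f (x + s • w) / f x) 0
          ∂(Measure.pi fun _ : Fin d => gaussianReal 0 1) ∂P) ≤ C' * s := by
  intro p hp
  have hP : P.map (WithLp.toLp 2) =
      volume.withDensity fun x : EuclideanSpace ℝ (Fin d) => .ofReal (f (WithLp.ofLp x)) :=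
    hdens ▸ map_withDensity_of_measurePreserving (e := MeasurableEquiv.toLp 2 (Fin d → ℝ))
      (PiLp.volume_preserving_toLp (Fin d)) _
  obtain ⟨C', hC', hbound⟩ := assumptionP_of_smooth_density_general hP (fun x => hf _)
    (isOpen_interior.preimage (PiLp.continuous_ofLp 2 _))
    (fun x hx => (hdiff _ hx).comp x (PiLp.hasFDerivAt_ofLp (𝕜 := ℝ) 2 x).differentiableAt)
    (integrableOn_norm_fderiv_comp_ofLp isOpen_interior.measurableSet hgradL1)
    (fun r hr => (map_toLp_cthickening_compl_interior P S hr).trans_le (hC r hr)) hp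
    (integrable_norm_rpow_stdGaussian (add_nonneg hp zero_le_one))
  refine ⟨C', hC', fun s hs => ?_⟩
  simpa [integral_integral_stdGaussian_map_toLp, EuclideanSpace.norm_eq, abs_of_nonneg hs]
    using hbound s
end
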